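/- With Θ as in the preceding context and the transported root-plugging σ ρ̃^{root} τ := Θ(Θ^{-1}(σ) ρ^{root} Θ^{-1}(τ)), for σ = X^k ∏_{i=1}^n I_{aᵢ}(σᵢ) and τ = X^{k̄} ∏_{i=1}^{n̄} I_{āᵢ}(τᵢ) one has the explicit formula σ ρ̃^{root} τ = Σ_{ℓ,ℓ̄} C(k̄, ℓ)·C(k, ℓ̄) · X^{k+k̄−|ℓ|−|ℓ̄|} ∏ᵢ I_{aᵢ−ℓᵢ}(σᵢ) ∏ᵢ I_{āᵢ−ℓ̄ᵢ}(τᵢ). In particular σ ρ̃^{root} τ = τ ρ̃^{root} σ. -/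

import Mathlib

/-- Planar rooted trees with vertex decorations in `V` and edge decorations in `E`. -/
inductive RT (V E : Type) : Type where
  | node : V → List (E × RT V E) → RT V E

/-- One-step reordering of children (at the root or at a deeper vertex). -/
inductive Swap {V E : Type} : RT V E → RT V E → Prop where
  | here (v : V) (l₁ l₂ : List (E × RT V E)) (p q : E × RT V E) :
      Swap (.node v (l₁ ++ p :: q :: l₂)) (.node v (l₁ ++ q :: p :: l₂))
  | child (v : V) (l₁ l₂ : List (E × RT V E)) (e : E) {t t' : RT V E} :
      Swap t t' → Swap (.node v (l₁ ++ (e, t) :: l₂)) (.node v (l₁ ++ (e, t') :: l₂))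

/-- (Non-planar) decorated rooted trees: planar trees modulo reordering of children. -/
def QT (V E : Type) : Type := Quot (@Swap V E)

/-- The linear span of decorated rooted trees, with rational coefficients. -/
abbrev Span (V E : Type) : Type := QT V E →₀ ℚ

def qt {V E : Type} (t : RT V E) : QT V E := Quot.mk _ t

/-- A tree, as a basis vector of the span. -/
noncomputable def bas {V E : Type} (t : RT V E) : Span V E := Finsupp.single (qt t) 1

/-- The element of the span given by a list of trees (sum with multiplicity). -/
noncomputable def ofList {V E : Type} (l : List (RT V E)) : Span V E := (l.map bas).sum

/-- Formal rational combination of planar trees, as an element of the span. -/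
noncomputable def combo {V E : Type} (l : List (ℚ × RT V E)) : Span V E :=
  (l.map fun p => p.1 • bas p.2).sum

mutual
/-- List of the graftings of `σ` on each vertex of a tree, via a new `a`-edge. -/
def graftT {V E : Type} (a : E) (σ : RT V E) : RT V E → List (RT V E)
  | .node v l => .node v ((a, σ) :: l) :: (graftL a σ l).map (.node v)
/-- Auxiliary: graftings of `σ` inside one of the listed subtrees. -/
def graftL {V E : Type} (a : E) (σ : RT V E) :
    List (E × RT V E) → List (List (E × RT V E))
  | [] => []
  | (e, t) :: r =>
      ((graftT a σ t).map fun t' => (e, t') :: r)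
        ++ ((graftL a σ r).map fun r' => (e, t) :: r')
end

/-- Multi-indices in `ℕ^{d+1}`. -/
abbrev Nd (d : ℕ) : Type := Fin (d + 1) → ℕ

/-- Componentwise binomial coefficient on `ℕ^{d+1}` (zero if some component exceeds). -/
def binom {d : ℕ} (n ℓ : Nd d) : ℕ := ∏ c, Nat.choose (n c) (ℓ c)

/-- Componentwise multinomial coefficient `C(m; ℓ₁, …, ℓ_n)` of a tuple of
multi-indices, as the iterated product of binomial coefficients (vanishing as soon as a
subtraction leaves `ℕ^{d+1}`). -/
def ndMnom {d : ℕ} (m : Nd d) {n : ℕ} (L : Fin n → Nd d) : ℕ :=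
  ∏ i : Fin n, binom (m - ∑ j ∈ Finset.univ.filter (· < i), L j) (L i)

/-- Plugging of `σ` at the root of `τ`: the two roots are identified, their (additive)
decorations are added, and the root branches are joined. -/
def plugRoot {V E : Type} [AddCommMonoid V] : RT V E → RT V E → RT V E
  | .node v l, .node w m => .node (v + w) (l ++ m)

mutual
/-- The isomorphism `Θ` on (planar representatives of) decorated trees, characterized
recursively by `Θ(X^k ∏ᵢ I_{aᵢ}(τᵢ)) = Σ_ℓ C(k;ℓ) X^{k−|ℓ|} ∏ᵢ I_{aᵢ−ℓᵢ}(Θ(τᵢ))`,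
`Θ(X^k) = X^k`, as a formal rational combination of planar trees. -/
noncomputable def ThT {L : Type} {d : ℕ} :
    RT (Nd d) (L × Nd d) → List (ℚ × RT (Nd d) (L × Nd d))
  | .node k l => (ThL k l).map fun p => (p.1, RT.node p.2.1 p.2.2)
/-- Auxiliary: processes the root branches, threading the remaining root decoration. -/
noncomputable def ThL {L : Type} {d : ℕ} (k : Nd d) :
    List ((L × Nd d) × RT (Nd d) (L × Nd d)) →
      List (ℚ × (Nd d × List ((L × Nd d) × RT (Nd d) (L × Nd d))))
  | [] => [(1, (k, []))]
  | (a, t) :: r =>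
      (Finset.Iic (k ⊓ a.2)).toList.flatMap fun ℓ =>
        (ThT t).flatMap fun p =>
          (ThL (k - ℓ) r).map fun q =>
            ((binom k ℓ : ℚ) * p.1 * q.1, (q.2.1, ((a.1, a.2 - ℓ), p.2) :: q.2.2))
end

section RootAlgebra

variable {L : Type} {d : ℕ}

/-- The branches `I_a(t)` attached to the root of a decorated tree. -/
abbrev Branch (L : Type) (d : ℕ) : Type := (L × Nd d) × RT (Nd d) (L × Nd d)

/-- The span of planar trees with its root-plugging product, as a monoid algebra: a planar tree
is a root decoration together with a word of branches. -/
abbrev RootAlg (L : Type) (d : ℕ) : Type :=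
  MonoidAlgebra ℚ (Multiplicative (Nd d) × FreeMonoid (Branch L d))

namespace RootAlg

/-- The planar tree with root decoration `k` and branches `l`. -/
noncomputable def tree (k : Nd d) (l : List (Branch L d)) : RootAlg L d :=
  MonoidAlgebra.single (Multiplicative.ofAdd k, FreeMonoid.ofList l) 1

/-- The linear map with prescribed values on planar trees. -/
noncomputable def extend {W : Type} [AddCommGroup W] [Module ℚ W]
    (f : Nd d → List (Branch L d) → W) : RootAlg L d →ₗ[ℚ] W :=
  (MonoidAlgebra.basis _ ℚ).constr ℚ fun m => f m.1.toAdd m.2.toList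

@[simp] lemma extend_tree {W : Type} [AddCommGroup W] [Module ℚ W]
    (f : Nd d → List (Branch L d) → W) (k : Nd d) (l : List (Branch L d)) :
    extend f (tree k l) = f k l := by
  rw [extend, tree, ← MonoidAlgebra.basis_apply, Module.Basis.constr_basis]
  rfl

lemma tree_mul (k k' : Nd d) (l l' : List (Branch L d)) :
    tree k l * tree k' l' = tree (k + k') (l ++ l') := by
  simp [tree, MonoidAlgebra.single_mul_single]

lemma one_eq_tree : (1 : RootAlg L d) = tree 0 [] := rfl

lemma induction_tree {p : RootAlg L d → Prop} (v : RootAlg L d) (tree : ∀ k l, p (tree k l))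
    (add : ∀ v w, p v → p w → p (v + w)) (smul : ∀ (r : ℚ) v, p v → p (r • v)) : p v := by
  induction v using MonoidAlgebra.induction_linear with
  | zero => simpa using smul 0 _ (tree 0 [])
  | add v w hv hw => exact add v w hv hw
  | single m r => simpa [RootAlg.tree] using smul r _ (tree m.1.toAdd m.2.toList)

lemma linearMap_ext {W : Type} [AddCommGroup W] [Module ℚ W] {f g : RootAlg L d →ₗ[ℚ] W}
    (h : ∀ k l, f (tree k l) = g (tree k l)) : f = g := by
  refine LinearMap.ext fun v => ?_
  induction v using induction_tree with
  | tree k l => exact h k l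
  | add v w hv hw => simp [hv, hw]
  | smul r v hv => simp [hv]

/-- The planting operator `I_a`. -/
noncomputable def plant (a : L × Nd d) : RootAlg L d →ₗ[ℚ] RootAlg L d :=
  extend fun k l => tree 0 [(a, .node k l)]

/-- The monomial `X_c`. -/
noncomputable def X (c : Fin (d + 1)) : RootAlg L d := tree (Pi.single c 1) []

lemma X_mul_tree (c : Fin (d + 1)) (k : Nd d) (l : List (Branch L d)) :
    X c * tree k l = tree (k + Pi.single c 1) l := by
  rw [X, tree_mul, add_comm, List.nil_append]

lemma X_mul_comm (c : Fin (d + 1)) (v : RootAlg L d) : X c * v = v * X c := by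
  induction v using induction_tree with
  | tree k l => rw [X, tree_mul, tree_mul, add_comm, List.nil_append, List.append_nil]
  | add v w hv hw => rw [mul_add, add_mul, hv, hw]
  | smul r v hv => rw [mul_smul_comm, smul_mul_assoc, hv]

lemma mul_X_mul (c : Fin (d + 1)) (v w : RootAlg L d) : v * (X c * w) = X c * (v * w) := by
  rw [← mul_assoc, ← X_mul_comm, mul_assoc]

/-- All ways of lowering by one the `c`-component of one of the edge decorations of a word. -/
def lower (c : Fin (d + 1)) : List (Branch L d) → List (List (Branch L d))
  | [] => []
  | (a, t) :: r =>
      (if a.2 c = 0 then [] else [((a.1, a.2 - Pi.single c 1), t) :: r])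
        ++ (lower c r).map ((a, t) :: ·)

lemma lower_append (c : Fin (d + 1)) (l m : List (Branch L d)) :
    lower c (l ++ m) = (lower c l).map (· ++ m) ++ (lower c m).map (l ++ ·) := by
  induction l with
  | nil => simp [lower]
  | cons x r ih =>
    obtain ⟨a, t⟩ := x
    simp only [List.cons_append, lower, ih]
    split_ifs <;> simp [Function.comp_def]

/-- The derivation lowering the `c`-component of the decorations of the root edges. -/
noncomputable def D (c : Fin (d + 1)) : RootAlg L d →ₗ[ℚ] RootAlg L d :=
  extend fun k l => ((lower c l).map (tree k)).sum

lemma D_tree (c : Fin (d + 1)) (k : Nd d) (l : List (Branch L d)) :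
    D c (tree k l) = ((lower c l).map (tree k)).sum := extend_tree _ _ _

lemma D_mul (c : Fin (d + 1)) (v w : RootAlg L d) : D c (v * w) = D c v * w + v * D c w := by
  induction v using induction_tree with
  | tree k l =>
    induction w using induction_tree with
    | tree k' l' =>
      simp only [tree_mul, D_tree, lower_append, List.map_append, List.sum_append, List.map_map,
        ← List.sum_map_mul_left, ← List.sum_map_mul_right, Function.comp_def]
    | add v w hv hw => simp only [mul_add, map_add, hv, hw]; abel
    | smul r v hv => simp only [mul_smul_comm, map_smul, hv, smul_add]
  | add v w hv hw => simp only [add_mul, map_add, hv, hw]; abel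
  | smul r v hv => simp only [smul_mul_assoc, map_smul, hv, smul_add]

lemma D_X_mul (c c' : Fin (d + 1)) (v : RootAlg L d) : D c (X c' * v) = X c' * D c v := by
  rw [D_mul]; simp [X, D_tree, lower]

lemma D_plant (c : Fin (d + 1)) (a : L × Nd d) (v : RootAlg L d) :
    D c (plant a v) = if a.2 c = 0 then 0 else plant (a.1, a.2 - Pi.single c 1) v := by
  induction v using induction_tree with
  | tree k l =>
    simp only [plant, extend_tree, D_tree, lower]
    split_ifs <;> simp
  | add v w hv hw => simp only [map_add, hv, hw]; split_ifs <;> simp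
  | smul r v hv => simp only [map_smul, hv]; split_ifs <;> simp

/-- Every decoration is reached from `0` by increments of single components. -/
lemma nd_induction {p : Nd d → Prop} (k : Nd d) (zero : p 0)
    (succ : ∀ c k, p k → p (k + Pi.single c 1)) : p k := by
  induction h : ∑ c, k c generalizing k with
  | zero =>
    have : k = 0 := by
      ext c
      exact Finset.sum_eq_zero_iff.mp h c (Finset.mem_univ c)
    rwa [this]
  | succ n ih =>
    obtain ⟨c, hc⟩ : ∃ c, k c ≠ 0 := by
      by_contra! hk
      simp [hk] at h
    have hk : k - Pi.single c 1 + Pi.single c 1 = k := by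
      apply tsub_add_cancel_of_le
      intro c'
      by_cases hcc : c' = c
      · subst hcc; simp; omega
      · simp [hcc]
    rw [← hk]
    apply succ
    apply ih
    rw [← hk] at h
    simp only [Pi.add_apply, Finset.sum_add_distrib, Finset.sum_pi_single', Finset.mem_univ,
      if_true] at h
    omega

lemma induction_X {p : RootAlg L d → Prop} (v : RootAlg L d) (word : ∀ l, p (tree 0 l))
    (X_mul : ∀ c v, p v → p (X c * v))
    (add : ∀ v w, p v → p w → p (v + w)) (smul : ∀ (r : ℚ) v, p v → p (r • v)) : p v := by
  induction v using induction_tree with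
  | tree k l =>
    induction k using nd_induction with
    | zero => exact word l
    | succ c k ih => rw [← X_mul_tree]; exact X_mul c _ ih
  | add v w hv hw => exact add v w hv hw
  | smul r v hv => exact smul r v hv

lemma D_comm (c c' : Fin (d + 1)) (v : RootAlg L d) : D c (D c' v) = D c' (D c v) := by
  induction v using induction_X with
  | word l =>
    induction l with
    | nil => simp [D_tree, lower]
    | cons x r ih =>
      obtain ⟨a, ⟨k, l⟩⟩ := x
      have h : tree 0 ((a, .node k l) :: r) = plant a (tree k l) * tree 0 r := by
        simp [plant, tree_mul]
      have hp : D c (D c' (plant a (tree k l))) = D c' (D c (plant a (tree k l))) := by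
        rcases eq_or_ne c c' with rfl | hc
        · rfl
        · simp only [D_plant, apply_ite (D _), map_zero, Pi.sub_apply, Pi.single_apply, hc,
            hc.symm, if_false, tsub_zero]
          rw [tsub_right_comm]
          split_ifs <;> rfl
      simp only [h, D_mul, map_add, ih, hp]
      abel
  | X_mul c'' v hv => simp only [D_X_mul, hv]
  | add v w hv hw => simp only [map_add, hv, hw]
  | smul r v hv => simp only [map_smul, hv]

/-- The expansion `Σ_ℓ C(k;ℓ) X^{k-|ℓ|} ∏ I_{aᵢ-ℓᵢ}(φ tᵢ)` of a word of branches `I_{aᵢ}(tᵢ)`. -/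
noncomputable def expand (φ : RT (Nd d) (L × Nd d) → RootAlg L d) :
    Nd d → List (Branch L d) → RootAlg L d
  | k, [] => tree k []
  | k, (a, t) :: r => ∑ ℓ ∈ Finset.Iic a.2,
      (binom k ℓ : ℚ) • (plant (a.1, a.2 - ℓ) (φ t) * expand φ (k - ℓ) r)

lemma binom_eq_zero {k ℓ : Nd d} (h : ¬ ℓ ≤ k) : binom k ℓ = 0 := by
  simp only [Pi.le_def, not_forall, not_le] at h
  obtain ⟨c, hc⟩ := h
  exact Finset.prod_eq_zero (Finset.mem_univ c) (Nat.choose_eq_zero_of_lt hc)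

lemma binom_add_single (c : Fin (d + 1)) (k ℓ : Nd d) :
    binom (k + Pi.single c 1) ℓ
      = binom k ℓ + if ℓ c = 0 then 0 else binom k (ℓ - Pi.single c 1) := by
  have h1 : ∀ n m : Nd d, binom n m
      = (n c).choose (m c) * ∏ i ∈ Finset.univ.erase c, (n i).choose (m i) := fun n m =>
    (Finset.mul_prod_erase _ _ (Finset.mem_univ c)).symm
  have h2 : ∀ n m n' m' : Nd d, (∀ i ≠ c, n i = n' i ∧ m i = m' i) →
      ∏ i ∈ Finset.univ.erase c, (n i).choose (m i)
        = ∏ i ∈ Finset.univ.erase c, (n' i).choose (m' i) := fun n m n' m' h =>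
    Finset.prod_congr rfl fun i hi => by
      obtain ⟨h1, h2⟩ := h i (Finset.ne_of_mem_erase hi)
      rw [h1, h2]
  rw [h1, h1 k ℓ, h1 k (ℓ - _), h2 (k + Pi.single c 1) ℓ k ℓ, h2 k (ℓ - _) k ℓ]
  · rcases h : ℓ c with _ | n
    · simp
    · simp [h, Nat.choose_succ_succ]; ring
  · intro i hi; simp [hi]
  · intro i hi; simp [hi]

lemma expand_add_single (φ : RT (Nd d) (L × Nd d) → RootAlg L d) (c : Fin (d + 1)) (k : Nd d)
    (l : List (Branch L d)) :
    expand φ (k + Pi.single c 1) l = X c * expand φ k l + D c (expand φ k l) := by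
  induction l generalizing k with
  | nil => simp [expand, X_mul_tree, D_tree, lower]
  | cons x r ih =>
    obtain ⟨a, t⟩ := x
    simp only [expand, binom_add_single, Nat.cast_add, add_smul, Finset.sum_add_distrib,
      map_sum, map_smul, D_mul, smul_add, Finset.mul_sum, mul_smul_comm]
    have h1 : ∀ ℓ : Nd d, (binom k ℓ : ℚ) •
        (plant (a.1, a.2 - ℓ) (φ t) * expand φ (k + Pi.single c 1 - ℓ) r)
        = (binom k ℓ : ℚ) • (X c * (plant (a.1, a.2 - ℓ) (φ t) * expand φ (k - ℓ) r))
          + (binom k ℓ : ℚ) • (plant (a.1, a.2 - ℓ) (φ t) * D c (expand φ (k - ℓ) r)) := by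
      intro ℓ
      by_cases hℓ : ℓ ≤ k
      · rw [tsub_add_eq_add_tsub hℓ |>.symm, ih, mul_add, smul_add, mul_X_mul]
      · simp [binom_eq_zero hℓ]
    have h2 : ∑ ℓ ∈ Finset.Iic a.2,
        ((if ℓ c = 0 then 0 else binom k (ℓ - Pi.single c 1) : ℕ) : ℚ) •
          (plant (a.1, a.2 - ℓ) (φ t) * expand φ (k + Pi.single c 1 - ℓ) r)
        = ∑ ℓ ∈ Finset.Iic a.2, (binom k ℓ : ℚ) •
          (D c (plant (a.1, a.2 - ℓ) (φ t)) * expand φ (k - ℓ) r) := by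
      refine Finset.sum_bij_ne_zero (fun ℓ _ _ => ℓ - Pi.single c 1) ?_ ?_ ?_ ?_
      · intro ℓ h _
        rw [Finset.mem_Iic] at h ⊢
        exact tsub_le_self.trans h
      · intro ℓ _ h ℓ' _ h' e
        have hc : ℓ c ≠ 0 := fun h0 => h (by simp [h0])
        have hc' : ℓ' c ≠ 0 := fun h0 => h' (by simp [h0])
        ext i
        have := congrFun e i
        by_cases hi : i = c
        · subst hi; simp at this; omega
        · simpa [hi] using this
      · intro ℓ h hne
        have hc : (a.2 - ℓ) c ≠ 0 := by
          intro h0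
          apply hne
          rw [D_plant, if_pos h0]
          simp
        have hadd : ℓ + Pi.single c 1 - Pi.single c 1 = ℓ := add_tsub_cancel_right _ _
        refine ⟨ℓ + Pi.single c 1, ?_, ?_, hadd⟩
        · rw [Finset.mem_Iic] at h ⊢
          intro i
          by_cases hi : i = c
          · subst hi; simp at hc ⊢; omega
          · simpa [hi] using h i
        · rw [D_plant, if_neg hc] at hne
          rw [if_neg (by simp), hadd, add_tsub_add_eq_tsub_right, ← tsub_tsub]
          exact hne
      · intro ℓ h hne
        have hc : ℓ c ≠ 0 := fun h0 => hne (by simp [h0])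
        have hs : ℓ - Pi.single c 1 + Pi.single c 1 = ℓ := by
          ext i
          by_cases hi : i = c
          · subst hi; simp; omega
          · simp [hi]
        have hle : ℓ c ≤ a.2 c := Finset.mem_Iic.mp h c
        have hc' : (a.2 - (ℓ - Pi.single c 1) : Nd d) c ≠ 0 := by simp; omega
        rw [if_neg hc, D_plant, if_neg hc', tsub_tsub, hs]
        congr 3
        conv_lhs => rw [← hs, add_tsub_add_eq_tsub_right]
    simp only [h1, Finset.sum_add_distrib, h2]
    abel

lemma expand_zero_cons (φ : RT (Nd d) (L × Nd d) → RootAlg L d) (a : L × Nd d)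
    (t : RT (Nd d) (L × Nd d)) (r : List (Branch L d)) :
    expand φ 0 ((a, t) :: r) = plant a (φ t) * expand φ 0 r := by
  rw [expand, Finset.sum_eq_single 0]
  · simp [binom]
  · intro ℓ _ h
    rw [binom_eq_zero, Nat.cast_zero, zero_smul]
    exact fun h' => h (le_antisymm h' (zero_le))
  · simp

lemma expand_zero_append (φ : RT (Nd d) (L × Nd d) → RootAlg L d) (l m : List (Branch L d)) :
    expand φ 0 (l ++ m) = expand φ 0 l * expand φ 0 m := by
  induction l with
  | nil => simp [expand, ← one_eq_tree]
  | cons x r ih => rw [List.cons_append, expand_zero_cons, expand_zero_cons, ih, mul_assoc]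

/-- The linear extension of `expand`. -/
noncomputable def expandL (φ : RT (Nd d) (L × Nd d) → RootAlg L d) :
    RootAlg L d →ₗ[ℚ] RootAlg L d := extend (expand φ)

lemma expandL_tree (φ : RT (Nd d) (L × Nd d) → RootAlg L d) (k : Nd d)
    (l : List (Branch L d)) : expandL φ (tree k l) = expand φ k l := extend_tree _ _ _

lemma expandL_X_mul (φ : RT (Nd d) (L × Nd d) → RootAlg L d) (c : Fin (d + 1))
    (v : RootAlg L d) : expandL φ (X c * v) = X c * expandL φ v + D c (expandL φ v) := by
  induction v using induction_tree with
  | tree k l => rw [X_mul_tree, expandL_tree, expandL_tree, expand_add_single]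
  | add v w hv hw => simp only [mul_add, map_add, hv, hw]; abel
  | smul r v hv => simp only [mul_smul_comm, map_smul, hv, smul_add]

lemma D_expandL (φ : RT (Nd d) (L × Nd d) → RootAlg L d) (c : Fin (d + 1))
    (v : RootAlg L d) : D c (expandL φ v) = expandL φ (D c v) := by
  induction v using induction_X with
  | word l =>
    simp only [D_tree, expandL_tree, map_list_sum, List.map_map, Function.comp_def]
    induction l with
    | nil => simp [expand, D_tree, lower]
    | cons x r ih =>
      obtain ⟨a, t⟩ := x
      rw [expand_zero_cons, D_mul, ih, D_plant, lower, List.map_append, List.sum_append,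
        List.map_map]
      simp only [Function.comp_def, expand_zero_cons, List.sum_map_mul_left]
      split_ifs <;> simp [expand_zero_cons]
  | X_mul c' v hv =>
    rw [expandL_X_mul, map_add, D_X_mul, D_X_mul, expandL_X_mul, D_comm, hv]
  | add v w hv hw => simp only [map_add, hv, hw]
  | smul r v hv => simp only [map_smul, hv]

/-- The span of the trees with trivial root decoration. -/
noncomputable def words (L : Type) (d : ℕ) : Submodule ℚ (RootAlg L d) :=
  Submodule.span ℚ (Set.range (tree 0))

lemma tree_zero_mem_words (l : List (Branch L d)) : tree 0 l ∈ words L d :=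
  Submodule.subset_span ⟨l, rfl⟩

lemma plant_mem_words (a : L × Nd d) (v : RootAlg L d) : plant a v ∈ words L d := by
  induction v using induction_tree with
  | tree k l => rw [plant, extend_tree]; exact tree_zero_mem_words _
  | add v w hv hw => rw [map_add]; exact add_mem hv hw
  | smul r v hv => rw [map_smul]; exact Submodule.smul_mem _ r hv

lemma mul_mem_words {v w : RootAlg L d} (hv : v ∈ words L d) (hw : w ∈ words L d) :
    v * w ∈ words L d := by
  induction hv, hw using Submodule.span_induction₂ with
  | mem_mem v w hv hw =>
    obtain ⟨l, rfl⟩ := hv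
    obtain ⟨m, rfl⟩ := hw
    rw [tree_mul, add_zero]
    exact tree_zero_mem_words _
  | zero_left w hw => simp
  | zero_right v hv => simp
  | add_left u v w _ _ _ hu hv => rw [add_mul]; exact add_mem hu hv
  | add_right u v w _ _ _ hu hv => rw [mul_add]; exact add_mem hu hv
  | smul_left r v w _ _ h => rw [smul_mul_assoc]; exact Submodule.smul_mem _ r h
  | smul_right r v w _ _ h => rw [mul_smul_comm]; exact Submodule.smul_mem _ r h

lemma expand_zero_mem_words (φ : RT (Nd d) (L × Nd d) → RootAlg L d) (l : List (Branch L d)) :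
    expand φ 0 l ∈ words L d := by
  induction l with
  | nil => exact tree_zero_mem_words []
  | cons x r ih => rw [expand_zero_cons]; exact mul_mem_words (plant_mem_words _ _) ih

/-- A planar tree as a basis vector of the root algebra. -/
noncomputable def ofRT : RT (Nd d) (L × Nd d) → RootAlg L d
  | .node k l => tree k l

lemma plant_ofRT (a : L × Nd d) (t : RT (Nd d) (L × Nd d)) :
    plant a (ofRT t) = tree 0 [(a, t)] := by
  cases t; simp [plant, ofRT]

lemma expand_ofRT_zero (l : List (Branch L d)) : expand ofRT 0 l = tree 0 l := by
  induction l with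
  | nil => rfl
  | cons x r ih => rw [expand_zero_cons, ih, plant_ofRT, tree_mul, add_zero]; rfl

/-- The transported product `(X^k u, X^m v) ↦ Ψ(X^m u) Ψ(X^k v)`, where `Ψ` expands only at
the root. -/
noncomputable def crossMul : RootAlg L d →ₗ[ℚ] RootAlg L d →ₗ[ℚ] RootAlg L d :=
  extend fun k l => extend fun m r => expand ofRT m l * expand ofRT k r

lemma crossMul_tree (k m : Nd d) (l r : List (Branch L d)) :
    crossMul (tree k l) (tree m r) = expandL ofRT (tree m l) * expandL ofRT (tree k r) := by
  simp [crossMul, expandL]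

lemma crossMul_list_sum {ι : Type} (s : List ι) (f : ι → RootAlg L d) (w : RootAlg L d) :
    crossMul (s.map f).sum w = (s.map fun i => crossMul (f i) w).sum := by
  rw [← LinearMap.flip_apply, map_list_sum, List.map_map]
  rfl

lemma crossMul_X_mul_left (c : Fin (d + 1)) (v w : RootAlg L d) :
    crossMul (X c * v) w = X c * crossMul v w + crossMul v (D c w) := by
  induction v using induction_tree with
  | tree k l =>
    induction w using induction_tree with
    | tree m r =>
      rw [X_mul_tree, crossMul_tree, ← X_mul_tree, expandL_X_mul, mul_add, mul_X_mul,
        crossMul_tree, D_expandL, D_tree, D_tree]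
      simp only [map_list_sum, List.map_map, Function.comp_def, crossMul_tree,
        List.sum_map_mul_left]
    | add v w hv hw => simp only [mul_add, map_add, hv, hw]; abel
    | smul r v hv => simp only [mul_smul_comm, map_smul, hv, smul_add]
  | add v w hv hw => simp only [mul_add, map_add, LinearMap.add_apply, hv, hw]; abel
  | smul r v hv => simp only [mul_smul_comm, map_smul, LinearMap.smul_apply, hv, smul_add]

lemma crossMul_X_mul_right (c : Fin (d + 1)) (v w : RootAlg L d) :
    crossMul v (X c * w) = X c * crossMul v w + crossMul (D c v) w := by
  induction v using induction_tree with
  | tree k l =>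
    induction w using induction_tree with
    | tree m r =>
      rw [X_mul_tree, crossMul_tree, ← X_mul_tree, expandL_X_mul, add_mul, mul_assoc,
        crossMul_tree, D_expandL, D_tree, D_tree, crossMul_list_sum]
      simp only [map_list_sum, List.map_map, Function.comp_def, crossMul_tree,
        ← List.sum_map_mul_right]
    | add v w hv hw => simp only [mul_add, map_add, hv, hw]; abel
    | smul r v hv => simp only [mul_smul_comm, map_smul, hv, smul_add]
  | add v w hv hw => simp only [mul_add, map_add, LinearMap.add_apply, hv, hw]; abel
  | smul r v hv => simp only [mul_smul_comm, map_smul, LinearMap.smul_apply, hv, smul_add]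

lemma D_crossMul (c : Fin (d + 1)) (v w : RootAlg L d) :
    D c (crossMul v w) = crossMul (D c v) w + crossMul v (D c w) := by
  induction v using induction_tree with
  | tree k l =>
    induction w using induction_tree with
    | tree m r =>
      rw [crossMul_tree, D_mul, D_expandL, D_expandL, D_tree c m l, D_tree c k r, D_tree c k l,
        D_tree c m r, crossMul_list_sum]
      simp only [map_list_sum, List.map_map, Function.comp_def, crossMul_tree,
        List.sum_map_mul_left, ← List.sum_map_mul_right]
    | add v w hv hw => simp only [map_add, hv, hw]; abel
    | smul r v hv => simp only [map_smul, hv, smul_add]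
  | add v w hv hw => simp only [map_add, LinearMap.add_apply, hv, hw]; abel
  | smul r v hv => simp only [map_smul, LinearMap.smul_apply, hv, smul_add]

lemma crossMul_of_mem_words {v w : RootAlg L d} (hv : v ∈ words L d) (hw : w ∈ words L d) :
    crossMul v w = v * w := by
  induction hv, hw using Submodule.span_induction₂ with
  | mem_mem v w hv hw =>
    obtain ⟨l, rfl⟩ := hv
    obtain ⟨m, rfl⟩ := hw
    rw [crossMul_tree, expandL_tree, expandL_tree, expand_ofRT_zero, expand_ofRT_zero]
  | zero_left w hw => simp
  | zero_right v hv => simp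
  | add_left u v w _ _ _ hu hv => rw [add_mul, map_add, LinearMap.add_apply, hu, hv]
  | add_right u v w _ _ _ hu hv => rw [mul_add, map_add, hu, hv]
  | smul_left r v w _ _ h => rw [smul_mul_assoc, map_smul, LinearMap.smul_apply, h]
  | smul_right r v w _ _ h => rw [mul_smul_comm, map_smul, h]

/-- Expansion maps intertwine root-plugging with the transported product. -/
lemma crossMul_expandL (φ : RT (Nd d) (L × Nd d) → RootAlg L d) (v w : RootAlg L d) :
    crossMul (expandL φ v) (expandL φ w) = expandL φ (v * w) := by
  induction v using induction_X with
  | word l =>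
    induction w using induction_X with
    | word m =>
      simp only [tree_mul, expandL_tree, add_zero, expand_zero_append]
      exact crossMul_of_mem_words (expand_zero_mem_words φ l) (expand_zero_mem_words φ m)
    | X_mul c w hw =>
      rw [mul_X_mul, expandL_X_mul, expandL_X_mul, map_add, crossMul_X_mul_right, ← hw,
        D_crossMul, add_assoc]
    | add v w hv hw => simp only [mul_add, map_add, hv, hw]
    | smul r v hv => simp only [mul_smul_comm, map_smul, hv]
  | X_mul c v hv =>
    rw [mul_assoc, expandL_X_mul, expandL_X_mul, map_add, LinearMap.add_apply,
      crossMul_X_mul_left, ← hv, D_crossMul]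
    abel
  | add v w hv hw => simp only [add_mul, map_add, LinearMap.add_apply, hv, hw]
  | smul r v hv => simp only [smul_mul_assoc, map_smul, LinearMap.smul_apply, hv]

/-- The planar lift of `Θ` on a tree. -/
noncomputable def theta (t : RT (Nd d) (L × Nd d)) : RootAlg L d :=
  ((ThT t).map fun p => p.1 • ofRT p.2).sum

lemma sum_flatMap {ι W : Type} [AddMonoid W] (s : List ι) (f : ι → List W) :
    (s.flatMap f).sum = (s.map fun i => (f i).sum).sum := by
  rw [List.flatMap, List.sum_flatten, List.map_map]
  rfl

lemma sum_ThL (k : Nd d) (l : List (Branch L d)) :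
    ((ThL k l).map fun q => q.1 • tree q.2.1 q.2.2).sum = expand theta k l := by
  induction l generalizing k with
  | nil => simp [ThL, expand]
  | cons x r ih =>
    obtain ⟨a, t⟩ := x
    have hsum : ∀ ℓ : Nd d, (((ThT t).flatMap fun p => (ThL (k - ℓ) r).map fun q =>
          ((binom k ℓ : ℚ) * p.1 * q.1, (q.2.1, ((a.1, a.2 - ℓ), p.2) :: q.2.2))).map
            fun q => q.1 • tree q.2.1 q.2.2).sum
        = (binom k ℓ : ℚ) • (plant (a.1, a.2 - ℓ) (theta t) * expand theta (k - ℓ) r) := by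
      intro ℓ
      rw [← ih, theta, map_list_sum, List.map_map, ← List.sum_map_mul_right, List.smul_sum,
        List.map_flatMap, sum_flatMap, List.map_map]
      congr 2
      funext p
      simp only [Function.comp_def, List.map_map, map_smul, plant_ofRT]
      rw [← List.sum_map_mul_left, List.smul_sum, List.map_map]
      congr 2
      funext q
      simp only [Function.comp_def, smul_mul_smul_comm, smul_smul, tree_mul, zero_add,
        List.singleton_append, mul_assoc]
    rw [ThL, List.map_flatMap, sum_flatMap]
    simp only [hsum, expand]
    rw [Finset.sum_map_toList]
    refine Finset.sum_subset (fun ℓ h => ?_) fun ℓ h h' => ?_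
    · simp only [Finset.mem_Iic, le_inf_iff] at h ⊢
      exact h.2
    · simp only [Finset.mem_Iic, le_inf_iff] at h h'
      rw [binom_eq_zero fun hk => h' ⟨hk, h⟩]
      simp

lemma theta_node (k : Nd d) (l : List (Branch L d)) :
    theta (.node k l) = expand theta k l := by
  rw [← sum_ThL, theta, ThT, List.map_map]
  rfl

lemma tree_mem_range_expandL_theta (k : Nd d) (l : List (Branch L d))
    (hl : ∀ x ∈ l, ofRT x.2 ∈ LinearMap.range (expandL (L := L) (d := d) theta)) :
    tree k l ∈ LinearMap.range (expandL (L := L) (d := d) theta) := by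
  induction k using nd_induction with
  | zero =>
    suffices h : ∃ y ∈ words L d, expandL theta y = tree 0 l from ⟨_, h.choose_spec.2⟩
    induction l with
    | nil => exact ⟨tree 0 [], tree_zero_mem_words [], expandL_tree _ _ _⟩
    | cons x r ih =>
      obtain ⟨a, t⟩ := x
      obtain ⟨⟨z, hz⟩, hr⟩ := List.forall_mem_cons.mp hl
      obtain ⟨y, hy, hyr⟩ := ih hr
      refine ⟨plant a z * y, mul_mem_words (plant_mem_words a z) hy, ?_⟩
      have key : expandL theta (plant a z * y) = plant a (expandL theta z) * expandL theta y := by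
        clear hyr hz
        induction hy using Submodule.span_induction with
        | mem y hy =>
          obtain ⟨m, rfl⟩ := hy
          induction z using induction_tree with
          | tree k l =>
            rw [plant, extend_tree, ← plant, tree_mul, add_zero, List.singleton_append,
              expandL_tree, expandL_tree, expandL_tree, expand_zero_cons, theta_node]
          | add v w hv hw => simp only [add_mul, map_add, hv, hw]
          | smul r v hv => simp only [smul_mul_assoc, map_smul, hv]
        | zero => simp
        | add v w _ _ hv hw => simp only [mul_add, map_add, hv, hw]
        | smul r v _ hv => simp only [mul_smul_comm, map_smul, hv]
      rw [key, hz, hyr, plant_ofRT, tree_mul, add_zero, List.singleton_append]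
  | succ c k ih =>
    obtain ⟨z, hz⟩ := ih
    refine ⟨X c * z - D c z, ?_⟩
    rw [map_sub, expandL_X_mul, ← D_expandL, hz, add_sub_cancel_right, X_mul_tree]

/-- The planar lift of `Θ` is surjective. -/
lemma ofRT_mem_range_expandL_theta : ∀ t : RT (Nd d) (L × Nd d),
    ofRT t ∈ LinearMap.range (expandL (L := L) (d := d) theta)
  | .node k l => tree_mem_range_expandL_theta k l fun x _ => ofRT_mem_range_expandL_theta x.2
  termination_by t => sizeOf t
  decreasing_by
    rename_i hx
    have := List.sizeOf_lt_of_mem hx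
    obtain ⟨a, t⟩ := x
    simp only [RT.node.sizeOf_spec, Prod.mk.sizeOf_spec] at this ⊢
    omega

lemma ndMnom_cons (k : Nd d) {n : ℕ} (ℓ : Nd d) (M : Fin n → Nd d) :
    ndMnom k (Fin.cons ℓ M : Fin (n + 1) → Nd d) = binom k ℓ * ndMnom (k - ℓ) M := by
  rw [ndMnom, Fin.prod_univ_succ, ndMnom]
  congr 1
  · simp
  · refine Finset.prod_congr rfl fun i _ => ?_
    simp [Finset.sum_filter, Fin.sum_univ_succ, tsub_tsub]

lemma sum_le_of_ndMnom_ne_zero {k : Nd d} {n : ℕ} {M : Fin n → Nd d} (h : ndMnom k M ≠ 0) :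
    ∑ i, M i ≤ k := by
  induction n generalizing k with
  | zero => simp
  | succ n ih =>
    induction M using Fin.consCases with
    | _ ℓ M =>
      rw [ndMnom_cons] at h
      have hℓ : ℓ ≤ k := by
        by_contra hk
        exact left_ne_zero_of_mul h (binom_eq_zero hk)
      simp only [Fin.sum_univ_succ, Fin.cons_zero, Fin.cons_succ]
      calc ℓ + ∑ i, M i ≤ ℓ + (k - ℓ) := by gcongr; exact ih (right_ne_zero_of_mul h)
        _ = k := add_tsub_cancel_of_le hℓ

lemma sum_Iic_fin_succ {W : Type} [AddCommMonoid W] {n : ℕ} (a : Fin (n + 1) → Nd d)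
    (f : (Fin (n + 1) → Nd d) → W) :
    ∑ M ∈ Finset.Iic a, f M
      = ∑ ℓ ∈ Finset.Iic (a 0), ∑ M ∈ Finset.Iic fun i => a i.succ, f (Fin.cons ℓ M) := by
  rw [← Finset.sum_product']
  refine Finset.sum_nbij' (fun M => (M 0, fun i => M i.succ)) (fun p => Fin.cons p.1 p.2)
    ?_ ?_ ?_ ?_ ?_
  · intro M h
    rw [Finset.mem_Iic] at h
    simp only [Finset.mem_product, Finset.mem_Iic]
    exact ⟨h 0, fun i => h i.succ⟩
  · intro p h
    simp only [Finset.mem_product, Finset.mem_Iic] at h ⊢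
    intro i
    induction i using Fin.cases with
    | zero => exact h.1
    | succ i => exact h.2 i
  · intro M _; exact Fin.cons_self_tail M
  · intro p _; rfl
  · intro M _; exact congrArg f (Fin.cons_self_tail M).symm

lemma expand_ofRT (k : Nd d) (l : List (Branch L d)) :
    expand ofRT k l = ∑ M ∈ Finset.Iic (fun i : Fin l.length => (l.get i).1.2),
      (ndMnom k M : ℚ) • tree (k - ∑ i, M i)
        (List.ofFn fun i : Fin l.length =>
          (((l.get i).1.1, (l.get i).1.2 - M i), (l.get i).2)) := by
  induction l generalizing k with
  | nil =>
    rw [Finset.sum_eq_single (fun i => i.elim0)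
      (fun M _ h => (h (funext fun i => i.elim0)).elim)]
    · simp [expand, ndMnom]
    · intro h
      exact (h (Finset.mem_Iic.mpr fun i => i.elim0)).elim
  | cons x r ih =>
    obtain ⟨a, t⟩ := x
    rw [expand]
    refine Eq.trans ?_ (sum_Iic_fin_succ (n := r.length) _ _).symm
    refine Finset.sum_congr rfl fun ℓ _ => ?_
    rw [ih, Finset.mul_sum, Finset.smul_sum]
    refine Finset.sum_congr rfl fun M _ => ?_
    rw [ndMnom_cons, plant_ofRT, mul_smul_comm, tree_mul, smul_smul, zero_add,
      List.singleton_append, Nat.cast_mul]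
    congr 2
    · rw [tsub_tsub]
      exact congrArg (k - ·)
        (Fin.sum_univ_succ (Fin.cons ℓ M : Fin (r.length + 1) → Nd d)).symm
    · refine Eq.trans ?_ (List.ofFn_succ (n := r.length)).symm
      rfl

/-- The projection from planar trees to trees. -/
noncomputable def toSpan : RootAlg L d →ₗ[ℚ] Span (Nd d) (L × Nd d) :=
  extend fun k l => bas (.node k l)

lemma toSpan_ofRT (t : RT (Nd d) (L × Nd d)) : toSpan (ofRT t) = bas t := by
  cases t; exact extend_tree _ _ _

lemma toSpan_theta (t : RT (Nd d) (L × Nd d)) : toSpan (theta t) = combo (ThT t) := by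
  rw [theta, combo, map_list_sum, List.map_map]
  simp only [Function.comp_def, map_smul, toSpan_ofRT]

end RootAlg

end RootAlgebra

lemma qt_node_perm {V E : Type} (v : V) {l m : List (E × RT V E)} (h : l.Perm m) :
    qt (.node v l) = qt (.node v m) := by
  suffices H : ∀ s, qt (.node v (s ++ l)) = qt (.node v (s ++ m)) from H []
  induction h with
  | nil => simp
  | cons x _ ih => intro s; simpa using ih (s ++ [x])
  | swap x y r => intro s; exact Quot.sound (.here v s r y x)
  | trans _ _ h1 h2 => intro s; exact (h1 s).trans (h2 s)

lemma bas_plugRoot_comm {V E : Type} [AddCommMonoid V] (σ τ : RT V E) :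
    bas (plugRoot σ τ) = bas (plugRoot τ σ) := by
  obtain ⟨v, l⟩ := σ
  obtain ⟨w, m⟩ := τ
  rw [plugRoot, plugRoot, add_comm, bas, bas, qt_node_perm _ List.perm_append_comm]

lemma span_linearMap_ext {V E W : Type} [AddCommGroup W] [Module ℚ W]
    {f g : Span V E →ₗ[ℚ] W} (h : ∀ t, f (bas t) = g (bas t)) : f = g := by
  refine Finsupp.lhom_ext' fun q => LinearMap.ext_ring ?_
  induction q using Quot.ind with
  | mk t => exact h t

/-- **Explicit formula and symmetry of the transported root-plugging.**  Let `Θ` be the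
triangular linear isomorphism of the span of decorated trees given by the recursion
`Θ(X^k ∏ I_{aᵢ}(τᵢ)) = Σ_ℓ C(k;ℓ) X^{k−|ℓ|} ∏ I_{aᵢ−ℓᵢ}(Θτᵢ)`, and let `P` be the
bilinear extension of the root-plugging `ρ^{root}` (adding node decorations and joining
root branches).  Then the transported product
`σ ρ̃^{root} τ := Θ(Θ⁻¹(σ) ρ^{root} Θ⁻¹(τ))` is given, for
`σ = X^k ∏_{i=1}^n I_{aᵢ}(σᵢ)` and `τ = X^{k̄} ∏_{i=1}^{n̄} I_{āᵢ}(τᵢ)`, by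
`σ ρ̃^{root} τ = Σ_{ℓ,ℓ̄} C(k̄,ℓ)·C(k,ℓ̄) ·
   X^{k+k̄−|ℓ|−|ℓ̄|} ∏ᵢ I_{aᵢ−ℓᵢ}(σᵢ) ∏ᵢ I_{āᵢ−ℓ̄ᵢ}(τᵢ)`;
in particular `σ ρ̃^{root} τ = τ ρ̃^{root} σ`. -/
theorem transported_plugRoot_formula {L : Type} {d : ℕ}
    (Θ : Span (Nd d) (L × Nd d) ≃ₗ[ℚ] Span (Nd d) (L × Nd d))
    (hΘ : ∀ t : RT (Nd d) (L × Nd d), Θ (bas t) = combo (ThT t))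
    (P : Span (Nd d) (L × Nd d) →ₗ[ℚ] Span (Nd d) (L × Nd d) →ₗ[ℚ] Span (Nd d) (L × Nd d))
    (hP : ∀ σ τ : RT (Nd d) (L × Nd d), P (bas σ) (bas τ) = bas (plugRoot σ τ)) :
    (∀ (k kb : Nd d) (l m : List ((L × Nd d) × RT (Nd d) (L × Nd d))),
      Θ (P (Θ.symm (bas (RT.node k l))) (Θ.symm (bas (RT.node kb m))))
        = ∑ ℓ ∈ Finset.Iic (fun i : Fin l.length => (l.get i).1.2),
            ∑ ℓb ∈ Finset.Iic (fun i : Fin m.length => (m.get i).1.2),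
              ((ndMnom kb ℓ * ndMnom k ℓb : ℕ) : ℚ) •
                bas (RT.node (k + kb - (∑ i, ℓ i) - (∑ i, ℓb i))
                  ((List.ofFn fun i : Fin l.length =>
                      (((l.get i).1.1, (l.get i).1.2 - ℓ i), (l.get i).2))
                    ++ (List.ofFn fun i : Fin m.length =>
                      (((m.get i).1.1, (m.get i).1.2 - ℓb i), (m.get i).2)))))
    ∧ (∀ σ τ : RT (Nd d) (L × Nd d),
        Θ (P (Θ.symm (bas σ)) (Θ.symm (bas τ)))
          = Θ (P (Θ.symm (bas τ)) (Θ.symm (bas σ)))) := by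
  have hΘπ : ∀ v : RootAlg L d, Θ (RootAlg.toSpan v)
      = RootAlg.toSpan (RootAlg.expandL RootAlg.theta v) := by
    intro v
    refine LinearMap.congr_fun (f := Θ.toLinearMap ∘ₗ RootAlg.toSpan)
      (g := RootAlg.toSpan ∘ₗ RootAlg.expandL RootAlg.theta)
      (RootAlg.linearMap_ext fun k l => ?_) v
    change Θ (RootAlg.toSpan (RootAlg.ofRT (.node k l))) = RootAlg.toSpan (RootAlg.expandL _ _)
    rw [RootAlg.toSpan_ofRT, hΘ, ← RootAlg.toSpan_theta, RootAlg.theta_node,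
      RootAlg.expandL_tree]
  have hPπ : ∀ v w : RootAlg L d, P (RootAlg.toSpan v) (RootAlg.toSpan w)
      = RootAlg.toSpan (v * w) := by
    intro v w
    induction v using RootAlg.induction_tree with
    | tree k l =>
      induction w using RootAlg.induction_tree with
      | tree m r =>
        rw [RootAlg.tree_mul]
        simp only [RootAlg.toSpan, RootAlg.extend_tree, hP, plugRoot]
      | add v w hv hw => simp only [mul_add, map_add, hv, hw]
      | smul r v hv => simp only [mul_smul_comm, map_smul, hv]
    | add v w hv hw => simp only [add_mul, map_add, LinearMap.add_apply, hv, hw]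
    | smul r v hv => simp only [smul_mul_assoc, map_smul, LinearMap.smul_apply, hv]
  refine ⟨fun k kb l m => ?_, fun σ τ => ?_⟩
  · obtain ⟨v, hv⟩ := RootAlg.ofRT_mem_range_expandL_theta (.node k l)
    obtain ⟨w, hw⟩ := RootAlg.ofRT_mem_range_expandL_theta (.node kb m)
    rw [← RootAlg.toSpan_ofRT, ← RootAlg.toSpan_ofRT (.node kb m),
      ← hv, ← hw, ← hΘπ, ← hΘπ, Θ.symm_apply_apply, Θ.symm_apply_apply, hPπ, hΘπ,
      ← RootAlg.crossMul_expandL, hv, hw, RootAlg.ofRT, RootAlg.ofRT, RootAlg.crossMul_tree, RootAlg.expandL_tree,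
      RootAlg.expandL_tree, RootAlg.expand_ofRT, RootAlg.expand_ofRT, Finset.sum_mul_sum,
      map_sum]
    refine Finset.sum_congr rfl fun M _ => ?_
    rw [map_sum]
    refine Finset.sum_congr rfl fun N _ => ?_
    rw [smul_mul_smul_comm, RootAlg.tree_mul, map_smul, ← Nat.cast_mul, RootAlg.toSpan,
      RootAlg.extend_tree]
    by_cases h : ndMnom kb M * ndMnom k N = 0
    · rw [h, Nat.cast_zero, zero_smul, zero_smul]
    · have hM := RootAlg.sum_le_of_ndMnom_ne_zero (left_ne_zero_of_mul h)
      have hN := RootAlg.sum_le_of_ndMnom_ne_zero (right_ne_zero_of_mul h)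
      rw [add_comm k, tsub_add_tsub_comm hM hN, tsub_tsub]
  · have hcomm : P = P.flip :=
      span_linearMap_ext fun σ => span_linearMap_ext fun τ => by
        rw [LinearMap.flip_apply, hP, hP, bas_plugRoot_comm]
    conv_lhs => rw [hcomm, LinearMap.flip_apply]
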